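/- arXiv:1910.14555 — 2 statements merged into one kernel-verified Lean document; each statement's English description precedes it below -/
import Mathlib

section
/- Let (Ω,Σ,μ) be a finite measure space, Z a real Banach space, and X ⊆ Z* a norm-closed subspace which is norming for Z. If ν : Σ → Z* is a countably additive μ-continuous vector measure satisfying condition (G), then for every B ∈ Σ the functional ν(B) : Z → ℝ is σ(Z,X)-sequentially continuous, i.e. ⟨ν(B), z_n⟩ → ⟨ν(B), z⟩ whenever (z_n) is a sequence in Z converging to z in the topology σ(Z,X). -/
open MeasureTheory Filter Set Topology
open scoped UniformConvergence

noncomputable section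

/-- The topology `σ(Z,X)` on `Z` of pointwise convergence on a subspace `X ⊆ Z*`. -/
def sigmaTop {Z : Type*} [NormedAddCommGroup Z] [NormedSpace ℝ Z]
    (X : Submodule ℝ (Z →L[ℝ] ℝ)) : TopologicalSpace Z :=
  TopologicalSpace.induced (fun z => fun x : X => (x : Z →L[ℝ] ℝ) z) Pi.topologicalSpace

/-- The weak* topology on the dual of `E`: pointwise convergence on `E`. -/
def wstarTop (E : Type*) [NormedAddCommGroup E] [NormedSpace ℝ E] :
    TopologicalSpace (E →L[ℝ] ℝ) :=
  TopologicalSpace.induced (fun f => (f : E → ℝ)) Pi.topologicalSpace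

/-- A norm-closed subspace `X ⊆ Z*` is norming for `Z` if
`|||z||| = sup {⟨x,z⟩ : x ∈ B_X}` is an equivalent norm on `Z`; since this sup is always
`≤ ‖z‖`, this amounts to the existence of `c > 0` with `c⬝‖z‖ ≤ |||z|||` for all `z`. -/
def IsNorming {Z : Type*} [NormedAddCommGroup Z] [NormedSpace ℝ Z]
    (X : Submodule ℝ (Z →L[ℝ] ℝ)) : Prop :=
  ∃ c > (0 : ℝ), ∀ z : Z, c * ‖z‖ ≤ sSup {r : ℝ | ∃ x ∈ X, ‖x‖ ≤ 1 ∧ r = x z}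

/-- The average range `𝒜_ν(A) = {ν(B)/μ(B) : B ∈ Σ, B ⊆ A, μ(B) > 0}`. -/
def avgRange {Ω : Type*} [MeasurableSpace Ω] {Z : Type*} [NormedAddCommGroup Z]
    [NormedSpace ℝ Z] (μ : Measure Ω) (ν : VectorMeasure Ω (Z →L[ℝ] ℝ)) (A : Set Ω) :
    Set (Z →L[ℝ] ℝ) :=
  {w | ∃ B : Set Ω, MeasurableSet B ∧ B ⊆ A ∧ 0 < μ B ∧ w = (μ B).toReal⁻¹ • ν B}

/-- Condition (G): for every `A ∈ Σ` with `μ(A) > 0`, the `w*`-closed convex hull of the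
average range `𝒜_ν(A)` intersects `X`. -/
def CondG {Ω : Type*} [MeasurableSpace Ω] {Z : Type*} [NormedAddCommGroup Z]
    [NormedSpace ℝ Z] (μ : Measure Ω) (ν : VectorMeasure Ω (Z →L[ℝ] ℝ))
    (X : Submodule ℝ (Z →L[ℝ] ℝ)) : Prop :=
  ∀ A : Set Ω, MeasurableSet A → 0 < μ A →
    (@closure _ (wstarTop Z) (convexHull ℝ (avgRange μ ν A)) ∩
      (X : Set (Z →L[ℝ] ℝ))).Nonempty

/-- `h` is a convex block subsequence of `g`: `h k = ∑_{n ∈ I k} a n • g n` where the finite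
sets `I k` satisfy `max (I k) < min (I (k+1))` and the `a n` are non-negative reals summing
to `1` over each `I k`. -/
def ConvexBlock {E : Type*} [AddCommMonoid E] [Module ℝ E] (g h : ℕ → E) : Prop :=
  ∃ (I : ℕ → Finset ℕ) (a : ℕ → ℝ),
    (∀ k, ∀ n ∈ I k, ∀ m ∈ I (k + 1), n < m) ∧
    (∀ n, 0 ≤ a n) ∧ (∀ k, ∑ n ∈ I k, a n = 1) ∧
    (∀ k, h k = ∑ n ∈ I k, a n • g n)

/-- `(B_{X*}, w*)` is convex block compact: every sequence in the closed unit ball of `X*`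
admits a convex block subsequence which is `w*`-convergent. -/
def DualBallConvexBlockCompact (X : Type*) [NormedAddCommGroup X] [NormedSpace ℝ X] : Prop :=
  ∀ g : ℕ → (X →L[ℝ] ℝ), (∀ n, ‖g n‖ ≤ 1) →
    ∃ h : ℕ → (X →L[ℝ] ℝ), ConvexBlock g h ∧
      ∃ f : X →L[ℝ] ℝ, Tendsto h atTop (@nhds _ (wstarTop X) f)

/-!
Let `(zₙ)` be `σ(Z,X)`-null. It is norm bounded by uniform boundedness on `X`, so along any
ultrafilter finer than `atTop` it converges weak* in `Z**` to some `ψ`, and it suffices to show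
`ψ (ν B) = 0`; replacing `(zₙ)` by `(-zₙ)`, even `ψ (ν B) ≤ 0` is enough.

The operator `D : Z** → L¹(μ)` taking a functional to the Radon–Nikodym derivative of its
composition with `ν` is weak*-to-weak continuous: its adjoint sends the indicator of `C` to
`ν C ∈ Z*`, and indicators span a dense subspace of `L^∞(μ) = L¹(μ)*`. By Mazur's theorem, `D ψ` is
then a norm limit of functions `D w` with `w` in the convex hull of any prescribed tail of `(zₙ)`.

Suppose `ψ (ν B) > 0`. Then `D ψ ≥ δ > 0` on a set of positive measure, and on a slightly smaller
set `A` of positive measure we get `D wₖ ≥ δ / 2` simultaneously for all `k`, with `wₖ` in the hull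
of the `k`-th tail. Hence every element of the weak*-closed convex hull of `𝒜_ν(A)` is at least
`δ / 2` at every `wₖ`. For the element of `X` provided by (G) this contradicts `zₙ → 0` in `σ(Z,X)`.
-/

section LpDuality

variable {Ω : Type*} [MeasurableSpace Ω] {μ : Measure Ω}

lemma exists_simpleFunc_forall_dist_lt {E : Type*} [PseudoMetricSpace E]
    [TopologicalSpace.SeparableSpace E] [MeasurableSpace E] [OpensMeasurableSpace E] [Nonempty E]
    {K : Set E} (hK : IsCompact K) {ε : ℝ} (hε : 0 < ε) :
    ∃ s : SimpleFunc E E, ∀ x ∈ K, dist (s x) x < ε := by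
  let e := TopologicalSpace.denseSeq E
  have hcover : K ⊆ ⋃ k, Metric.ball (e k) ε := fun x _ =>
    let ⟨k, hk⟩ := (TopologicalSpace.denseRange_denseSeq E).exists_dist_lt x hε
    mem_iUnion.2 ⟨k, hk⟩
  obtain ⟨t, ht⟩ := hK.elim_finite_subcover _ (fun _ => Metric.isOpen_ball) hcover
  refine ⟨SimpleFunc.nearestPt e (t.sup id), fun x hx => ?_⟩
  obtain ⟨k, hkt, hk⟩ := mem_iUnion₂.1 (ht hx)
  have hnearest := SimpleFunc.edist_nearestPt_le e x (Finset.le_sup (f := id) hkt)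
  rw [edist_dist, edist_dist, id, ENNReal.ofReal_le_ofReal_iff dist_nonneg] at hnearest
  exact hnearest.trans_lt (Metric.mem_ball'.1 hk)

lemma indicatorConstLp_eq_smul_one {p : ENNReal} {C : Set Ω} (hC : MeasurableSet C)
    (hμC : μ C ≠ ⊤) (c : ℝ) :
    indicatorConstLp p hC hμC c = c • indicatorConstLp p hC hμC (1 : ℝ) := by
  simp only [indicatorConstLp, ← MemLp.toLp_const_smul]
  congr 1
  ext ω
  by_cases hω : ω ∈ C <;> simp [hω]

lemma toLp_simpleFunc_mem_span_indicatorConstLp [IsFiniteMeasure μ] {p : ENNReal}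
    (s : SimpleFunc Ω ℝ) :
    (s.memLp_of_isFiniteMeasure p μ).toLp s ∈
      Submodule.span ℝ (range fun C : {C : Set Ω // MeasurableSet C} =>
        indicatorConstLp p C.2 (measure_ne_top μ C) (1 : ℝ)) := by
  induction s using SimpleFunc.induction with
  | @const c C hC =>
    have hsimple : (SimpleFunc.memLp_of_isFiniteMeasure _ p μ).toLp
        (SimpleFunc.piecewise C hC (SimpleFunc.const Ω c) (SimpleFunc.const Ω 0)) =
          indicatorConstLp p hC (measure_ne_top μ C) c :=
      MemLp.toLp_congr _ _ (.of_forall fun ω => by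
        by_cases hω : ω ∈ C <;> simp [hω])
    rw [hsimple, indicatorConstLp_eq_smul_one]
    exact Submodule.smul_mem _ c (Submodule.subset_span ⟨⟨C, hC⟩, rfl⟩)
  | @add s t _ hs ht => exact Submodule.add_mem _ hs ht

lemma ae_norm_coeFn_le_norm_Lp_top {E : Type*} [NormedAddCommGroup E] (f : Lp E ⊤ μ) :
    ∀ᵐ ω ∂μ, ‖f ω‖ ≤ ‖f‖ := by
  filter_upwards [ae_le_eLpNormEssSup (f := f) (μ := μ)] with ω hω
  rw [← eLpNorm_exponent_top] at hω
  rw [Lp.norm_def, ← toReal_enorm]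
  exact ENNReal.toReal_mono (Lp.eLpNorm_ne_top f) hω

lemma dist_le_of_ae_dist_le_Lp_top {E : Type*} [NormedAddCommGroup E] {f g : Lp E ⊤ μ} {ε : ℝ}
    (hε : 0 ≤ ε) (h : ∀ᵐ ω ∂μ, dist (f ω) (g ω) ≤ ε) : dist f g ≤ ε := by
  rw [Lp.dist_def, eLpNorm_exponent_top]
  refine ENNReal.toReal_le_of_le_ofReal hε (eLpNormEssSup_le_of_ae_bound ?_)
  simpa only [Pi.sub_apply, ← dist_eq_norm] using h

lemma dense_span_indicatorConstLp_top [IsFiniteMeasure μ] :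
    Dense (Submodule.span ℝ (range fun C : {C : Set Ω // MeasurableSet C} =>
      indicatorConstLp ⊤ C.2 (measure_ne_top μ C) (1 : ℝ)) : Set (Lp ℝ ⊤ μ)) := by
  refine fun f => Metric.mem_closure_iff.2 fun ε hε => ?_
  obtain ⟨r, hr⟩ := exists_simpleFunc_forall_dist_lt
    (isCompact_closedBall (0 : ℝ) ‖f‖) (half_pos hε)
  let s : SimpleFunc Ω ℝ := r.comp f (Lp.stronglyMeasurable f).measurable
  refine ⟨_, toLp_simpleFunc_mem_span_indicatorConstLp s, lt_of_le_of_lt ?_ (half_lt_self hε)⟩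
  refine dist_le_of_ae_dist_le_Lp_top (half_pos hε).le ?_
  filter_upwards [(s.memLp_of_isFiniteMeasure ⊤ μ).coeFn_toLp, ae_norm_coeFn_le_norm_Lp_top f]
    with ω hs hf
  rw [hs, dist_comm]
  exact (hr (f ω) (mem_closedBall_zero_iff.2 hf)).le

lemma clm_ext_indicatorConstLp {E F : Type*} [NormedAddCommGroup E] [NormedSpace ℝ E]
    [NormedAddCommGroup F] [NormedSpace ℝ F] {p : ENNReal} [Fact (1 ≤ p)] (hp : p ≠ ⊤)
    {S T : Lp E p μ →L[ℝ] F}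
    (h : ∀ (c : E) (C : Set Ω) (hC : MeasurableSet C) (hμC : μ C ≠ ⊤),
      S (indicatorConstLp p hC hμC c) = T (indicatorConstLp p hC hμC c)) : S = T := by
  ext f
  induction f using Lp.induction hp with
  | indicatorConst c hC hμC => simpa only [Lp.simpleFunc.coe_indicatorConst] using h c _ hC hμC.ne
  | add hf hg _ hSf hSg => rw [map_add, map_add, hSf, hSg]
  | isClosed => exact isClosed_eq S.continuous T.continuous

lemma ae_abs_le_of_forall_abs_setIntegral_le [IsFiniteMeasure μ] {h : Ω → ℝ}
    (hh : Integrable h μ) {K : ℝ}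
    (hK : ∀ C, MeasurableSet C → |∫ ω in C, h ω ∂μ| ≤ K * μ.real C) :
    ∀ᵐ ω ∂μ, |h ω| ≤ K := by
  have hupper : h ≤ᵐ[μ] fun _ => K :=
    ae_le_of_forall_setIntegral_le hh (integrable_const K) fun C hC _ => by
      rw [setIntegral_const, smul_eq_mul, mul_comm]
      exact (abs_le.1 (hK C hC)).2
  have hlower : (fun _ => -K) ≤ᵐ[μ] h :=
    ae_le_of_forall_setIntegral_le (integrable_const _) hh fun C hC _ => by
      rw [setIntegral_const, smul_eq_mul, mul_neg, mul_comm]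
      exact (abs_le.1 (hK C hC)).1
  filter_upwards [hupper, hlower] with ω hle hge using abs_le.2 ⟨hge, hle⟩

lemma exists_integrable_setIntegral_eq_apply_indicatorConstLp [IsFiniteMeasure μ]
    (Λ : StrongDual ℝ (Lp ℝ 1 μ)) :
    ∃ h : Ω → ℝ, Integrable h μ ∧ ∀ (C : Set Ω) (hC : MeasurableSet C),
      ∫ ω in C, h ω ∂μ = Λ (indicatorConstLp 1 hC (measure_ne_top μ C) 1) := by
  let one : Lp ℝ 2 μ := indicatorConstLp 2 MeasurableSet.univ (measure_ne_top μ univ) 1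
  -- The inclusion `L² ⊆ L¹` as Hölder multiplication by the constant `1`.
  let inclusion : Lp ℝ 2 μ →L[ℝ] Lp ℝ 1 μ := (ContinuousLinearMap.mul ℝ ℝ).holderL μ 2 2 1 one
  let h : Lp ℝ 2 μ := (InnerProductSpace.toDual ℝ (Lp ℝ 2 μ)).symm (Λ ∘L inclusion)
  refine ⟨h, (Lp.memLp h).integrable one_le_two, fun C hC => ?_⟩
  have hinclusion : inclusion (indicatorConstLp 2 hC (measure_ne_top μ C) 1) =
      indicatorConstLp 1 hC (measure_ne_top μ C) 1 := by
    refine Lp.ext ?_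
    filter_upwards [ContinuousLinearMap.coeFn_holder (r := 1) (ContinuousLinearMap.mul ℝ ℝ) one
        (indicatorConstLp 2 hC (measure_ne_top μ C) (1 : ℝ)),
      indicatorConstLp_coeFn (p := 2) (hs := MeasurableSet.univ) (hμs := measure_ne_top μ univ)
        (c := (1 : ℝ)),
      indicatorConstLp_coeFn (p := 2) (hs := hC) (hμs := measure_ne_top μ C) (c := (1 : ℝ)),
      indicatorConstLp_coeFn (p := 1) (hs := hC) (hμs := measure_ne_top μ C) (c := (1 : ℝ))]
      with ω hmul hone h₂ h₁
    simp only [inclusion, ContinuousLinearMap.holderL_apply_apply, hmul, one, hone, h₂, h₁]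
    simp
  rw [← L2.inner_indicatorConstLp_one hC (measure_ne_top μ C) h, real_inner_comm,
    InnerProductSpace.toDual_symm_apply, ContinuousLinearMap.comp_apply, hinclusion]

lemma lpPairing_indicatorConstLp [IsFiniteMeasure μ] {C : Set Ω} (hC : MeasurableSet C)
    (g : Lp ℝ 1 μ) :
    (ContinuousLinearMap.mul ℝ ℝ).lpPairing μ ⊤ 1
      (indicatorConstLp ⊤ hC (measure_ne_top μ C) 1) g = ∫ ω in C, g ω ∂μ := by
  rw [ContinuousLinearMap.lpPairing_eq_integral, ← integral_indicator hC]
  refine integral_congr_ae ?_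
  filter_upwards [indicatorConstLp_coeFn (p := ⊤) (hs := hC) (hμs := measure_ne_top μ C)
    (c := (1 : ℝ))] with ω hω
  by_cases hωC : ω ∈ C <;> simp [hω, hωC]

lemma lpPairing_top_one_surjective [IsFiniteMeasure μ] :
    Function.Surjective ((ContinuousLinearMap.mul ℝ ℝ).lpPairing μ ⊤ 1) := by
  intro Λ
  obtain ⟨h, hh, hΛ⟩ := exists_integrable_setIntegral_eq_apply_indicatorConstLp Λ
  have hbound : ∀ᵐ ω ∂μ, ‖h ω‖ ≤ ‖Λ‖ :=
    ae_abs_le_of_forall_abs_setIntegral_le hh fun C hC => by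
      rw [hΛ C hC, ← Real.norm_eq_abs]
      refine (Λ.le_opNorm _).trans_eq ?_
      simp [norm_indicatorConstLp one_ne_zero ENNReal.one_ne_top]
  have hmem : MemLp h ⊤ μ := memLp_top_of_bound hh.aestronglyMeasurable _ hbound
  refine ⟨hmem.toLp h, clm_ext_indicatorConstLp ENNReal.one_ne_top fun c C hC hμC => ?_⟩
  rw [indicatorConstLp_eq_smul_one, map_smul, map_smul, ← hΛ C hC,
    ContinuousLinearMap.lpPairing_eq_integral, ← integral_indicator hC]
  congr 1
  refine integral_congr_ae ?_
  filter_upwards [hmem.coeFn_toLp, indicatorConstLp_coeFn (p := 1) (hs := hC) (hμs := hμC)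
    (c := (1 : ℝ))] with ω hhω hCω
  by_cases hωC : ω ∈ C <;> simp [hhω, hCω, hωC]

lemma strongDual_L1_eq_top_of_isClosed [IsFiniteMeasure μ]
    {S : Submodule ℝ (StrongDual ℝ (Lp ℝ 1 μ))} (hS : IsClosed (S : Set (StrongDual ℝ (Lp ℝ 1 μ))))
    (hmem : ∀ (C : Set Ω) (hC : MeasurableSet C), (ContinuousLinearMap.mul ℝ ℝ).lpPairing μ ⊤ 1
      (indicatorConstLp ⊤ hC (measure_ne_top μ C) 1) ∈ S) : S = ⊤ := by
  let P := (ContinuousLinearMap.mul ℝ ℝ).lpPairing μ ⊤ 1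
  have hspan : Submodule.span ℝ (range fun C : {C : Set Ω // MeasurableSet C} =>
      indicatorConstLp ⊤ C.2 (measure_ne_top μ C) (1 : ℝ)) ≤ S.comap P.toLinearMap :=
    Submodule.span_le.2 (range_subset_iff.2 fun C => hmem C C.2)
  refine eq_top_iff.2 fun Λ _ => ?_
  obtain ⟨h, rfl⟩ := lpPairing_top_one_surjective Λ
  exact closure_minimal hspan (hS.preimage P.continuous) (dense_span_indicatorConstLp_top h)

end LpDuality

section DualDensity

variable {Ω : Type*} [MeasurableSpace Ω] {μ : Measure Ω}
variable {E : Type*} [NormedAddCommGroup E] [NormedSpace ℝ E]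

lemma L1_eq_of_forall_setIntegral_eq {F : Type*} [NormedAddCommGroup F] [NormedSpace ℝ F]
    [CompleteSpace F] {f g : Lp F 1 μ}
    (h : ∀ C, MeasurableSet C → ∫ ω in C, f ω ∂μ = ∫ ω in C, g ω ∂μ) : f = g :=
  Lp.ext <| Integrable.ae_eq_of_forall_setIntegral_eq f g (L1.integrable_coeFn f)
    (L1.integrable_coeFn g) fun C hC _ => h C hC

lemma exists_L1_setIntegral_eq_apply [SigmaFinite μ] {ν : VectorMeasure Ω E}
    (hν : ν ≪ᵥ μ.toENNRealVectorMeasure) (ψ : StrongDual ℝ E) :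
    ∃ g : Lp ℝ 1 μ, ∀ C, MeasurableSet C → ∫ ω in C, g ω ∂μ = ψ (ν C) := by
  let s : SignedMeasure Ω := ν.mapRange (ψ : E →ₗ[ℝ] ℝ).toAddMonoidHom ψ.continuous
  have hs : s ≪ᵥ μ.toENNRealVectorMeasure := fun C hC => by
    change ψ (ν C) = 0
    rw [hν hC, map_zero]
  have hint : Integrable (s.rnDeriv μ) μ := SignedMeasure.integrable_rnDeriv s μ
  refine ⟨hint.toL1, fun C hC => ?_⟩
  rw [setIntegral_congr_ae hC (hint.coeFn_toL1.mono fun _ h _ => h), ← withDensityᵥ_apply hint hC,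
    SignedMeasure.withDensityᵥ_rnDeriv_eq s μ hs]
  rfl

variable [SigmaFinite μ]

/-- The linear map underlying `dualDensity`. -/
def dualDensityₗ (ν : VectorMeasure Ω E) (hν : ν ≪ᵥ μ.toENNRealVectorMeasure) :
    StrongDual ℝ E →ₗ[ℝ] Lp ℝ 1 μ :=
  have hspec ψ := (exists_L1_setIntegral_eq_apply hν ψ).choose_spec
  { toFun := fun ψ => (exists_L1_setIntegral_eq_apply hν ψ).choose
    map_add' := fun φ ψ => L1_eq_of_forall_setIntegral_eq fun C hC => by
      rw [setIntegral_congr_ae hC ((Lp.coeFn_add _ _).mono fun _ h _ => h),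
        integral_add' (L1.integrable_coeFn _).integrableOn (L1.integrable_coeFn _).integrableOn,
        hspec _ C hC, hspec _ C hC, hspec _ C hC, add_apply]
    map_smul' := fun a ψ => L1_eq_of_forall_setIntegral_eq fun C hC => by
      rw [setIntegral_congr_ae hC ((Lp.coeFn_smul _ _).mono fun _ h _ => h)]
      simp only [Pi.smul_apply, integral_smul, RingHom.id_apply]
      rw [hspec _ C hC, hspec _ C hC, smul_apply] }

lemma setIntegral_dualDensityₗ {ν : VectorMeasure Ω E} (hν : ν ≪ᵥ μ.toENNRealVectorMeasure)
    (ψ : StrongDual ℝ E) {C : Set Ω} (hC : MeasurableSet C) :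
    ∫ ω in C, dualDensityₗ ν hν ψ ω ∂μ = ψ (ν C) :=
  (exists_L1_setIntegral_eq_apply hν ψ).choose_spec C hC

/-- The operator `E* → L¹(μ)` sending `ψ` to the Radon–Nikodym derivative of the scalar measure
`ψ ∘ ν`. It is characterised by its set integrals, see `setIntegral_dualDensity`; its continuity
comes from the closed graph theorem. -/
def dualDensity (ν : VectorMeasure Ω E) (hν : ν ≪ᵥ μ.toENNRealVectorMeasure) :
    StrongDual ℝ E →L[ℝ] Lp ℝ 1 μ :=
  .ofSeqClosedGraph (g := dualDensityₗ ν hν) fun u ψ g hu hg =>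
    L1_eq_of_forall_setIntegral_eq fun C hC => by
      refine tendsto_nhds_unique ((continuous_setIntegral C).continuousAt.tendsto.comp hg) ?_
      simp only [Function.comp_def, setIntegral_dualDensityₗ hν _ hC]
      exact ((ContinuousLinearMap.apply ℝ ℝ (ν C)).continuous.tendsto ψ).comp hu

lemma setIntegral_dualDensity {ν : VectorMeasure Ω E} (hν : ν ≪ᵥ μ.toENNRealVectorMeasure)
    (ψ : StrongDual ℝ E) {C : Set Ω} (hC : MeasurableSet C) :
    ∫ ω in C, dualDensity ν hν ψ ω ∂μ = ψ (ν C) :=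
  setIntegral_dualDensityₗ hν ψ hC

end DualDensity

section WeakStar

variable {Ω : Type*} [MeasurableSpace Ω] {μ : Measure Ω} [IsFiniteMeasure μ]
variable {E : Type*} [NormedAddCommGroup E] [NormedSpace ℝ E] [CompleteSpace E]

lemma exists_forall_apply_dualDensity_eq {ν : VectorMeasure Ω E}
    (hν : ν ≪ᵥ μ.toENNRealVectorMeasure) (Λ : StrongDual ℝ (Lp ℝ 1 μ)) :
    ∃ e : E, ∀ ψ : StrongDual ℝ E, Λ (dualDensity ν hν ψ) = ψ e := by
  let J : E →ₗᵢ[ℝ] StrongDual ℝ (StrongDual ℝ E) := NormedSpace.inclusionInDoubleDualLi ℝ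
  let adjoint : StrongDual ℝ (Lp ℝ 1 μ) →L[ℝ] StrongDual ℝ (StrongDual ℝ E) :=
    (ContinuousLinearMap.compL ℝ (StrongDual ℝ E) (Lp ℝ 1 μ) ℝ).flip (dualDensity ν hν)
  let S : Submodule ℝ (StrongDual ℝ (Lp ℝ 1 μ)) :=
    (LinearMap.range J.toLinearMap).comap adjoint.toLinearMap
  have hrange : IsClosed (range J) :=
    J.isometry.isUniformInducing.isComplete_range.isClosed
  have hclosed : IsClosed (S : Set (StrongDual ℝ (Lp ℝ 1 μ))) := hrange.preimage adjoint.continuous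
  have htop : S = ⊤ := strongDual_L1_eq_top_of_isClosed hclosed fun C hC =>
    ⟨ν C, ContinuousLinearMap.ext fun ψ =>
      ((lpPairing_indicatorConstLp hC _).trans (setIntegral_dualDensity hν ψ hC)).symm⟩
  obtain ⟨e, he⟩ : Λ ∈ S := htop ▸ Submodule.mem_top
  exact ⟨e, fun ψ => (DFunLike.congr_fun he ψ).symm⟩

lemma dualDensity_mem_closure_image {ν : VectorMeasure Ω E}
    (hν : ν ≪ᵥ μ.toENNRealVectorMeasure) {K : Set (WeakDual ℝ E)} (hK : Convex ℝ K)
    {ψ : WeakDual ℝ E} (hψ : ψ ∈ closure K) :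
    dualDensity ν hν (WeakDual.toStrongDual ψ) ∈
      closure ((fun φ : WeakDual ℝ E => dualDensity ν hν (WeakDual.toStrongDual φ)) '' K) := by
  let D : WeakDual ℝ E →ₗ[ℝ] Lp ℝ 1 μ :=
    (dualDensity ν hν).toLinearMap ∘ₗ WeakDual.toStrongDual.toLinearMap
  have hD (Λ : StrongDual ℝ (Lp ℝ 1 μ)) : Continuous (D.dualMap Λ) := by
    obtain ⟨e, he⟩ := exists_forall_apply_dualDensity_eq hν Λ
    exact (WeakDual.eval_continuous e).congr fun φ => (he (WeakDual.toStrongDual φ)).symm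
  have : LocallyConvexSpace ℝ (WeakDual ℝ E) :=
    inferInstanceAs (LocallyConvexSpace ℝ (WeakBilin (topDualPairing ℝ E)))
  exact D.image_closure_of_convex hK hD (mem_image_of_mem D hψ)

end WeakStar

section ConvergenceInMeasure

variable {Ω : Type*} [MeasurableSpace Ω] {μ : Measure Ω}

lemma exists_measurableSet_forall_le_of_setIntegral_pos {f : Ω → ℝ} (hf : Measurable f)
    {B : Set Ω} (hB : MeasurableSet B) (hμB : μ B ≠ ⊤) (hpos : 0 < ∫ ω in B, f ω ∂μ) :
    ∃ δ > 0, ∃ A ⊆ B, MeasurableSet A ∧ 0 < μ A ∧ ∀ ω ∈ A, δ ≤ f ω := by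
  have hμB₀ : μ B ≠ 0 := fun h => hpos.ne' (setIntegral_measure_zero f h)
  have hint : IntegrableOn f B μ := not_imp_comm.1 integral_undef hpos.ne'
  refine ⟨⨍ ω in B, f ω ∂μ, ?_, {ω ∈ B | ⨍ a in B, f a ∂μ ≤ f ω}, sep_subset _ _,
    hB.inter (measurableSet_le measurable_const hf), measure_setAverage_le_pos hμB₀ hμB hint,
    fun _ hω => hω.2⟩
  rw [setAverage_eq]
  exact smul_pos (inv_pos.2 (ENNReal.toReal_pos hμB₀ hμB)) hpos

variable {E : Type*} [NormedAddCommGroup E] {p : ENNReal} [Fact (1 ≤ p)]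

lemma exists_mem_measure_le_dist_lt_of_mem_closure {S : Set (Lp E p μ)} {g : Lp E p μ}
    (hg : g ∈ closure S) {r : ℝ} (hr : 0 < r) {η : ENNReal} (hη : 0 < η) :
    ∃ f ∈ S, μ {ω | r ≤ dist (f ω) (g ω)} < η := by
  obtain ⟨f, hfS, hfg⟩ := mem_closure_iff_seq_limit.1 hg
  have hmeasure := tendstoInMeasure_iff_dist.1 (tendstoInMeasure_of_tendsto_Lp hfg) r hr
  obtain ⟨n, hn⟩ := (hmeasure.eventually_lt_const hη).exists
  exact ⟨f n, hfS n, hn⟩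

lemma exists_measurableSet_forall_dist_lt_of_mem_closure {ι : Type*} [Countable ι]
    {S : ι → Set (Lp E p μ)} {g : Lp E p μ} (hg : ∀ k, g ∈ closure (S k)) {A : Set Ω}
    (hA : MeasurableSet A) (hμA : 0 < μ A) {r : ℝ} (hr : 0 < r) :
    ∃ A' ⊆ A, MeasurableSet A' ∧ 0 < μ A' ∧
      ∀ k, ∃ f ∈ S k, ∀ ω ∈ A', dist (f ω) (g ω) < r := by
  obtain ⟨η, hη, hsum⟩ := ENNReal.exists_pos_sum_of_countable' hμA.ne' ι
  choose f hfS hf using fun k => exists_mem_measure_le_dist_lt_of_mem_closure (hg k) hr (hη k)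
  let bad : ι → Set Ω := fun k => {ω | r ≤ dist (f k ω) (g ω)}
  have hbad (k : ι) : MeasurableSet (bad k) :=
    ((Lp.stronglyMeasurable (f k)).dist (Lp.stronglyMeasurable g)).measurable measurableSet_Ici
  have hμbad : μ (⋃ k, bad k) < μ A :=
    (measure_iUnion_le bad).trans_lt ((ENNReal.tsum_le_tsum fun k => (hf k).le).trans_lt hsum)
  refine ⟨A \ ⋃ k, bad k, sdiff_subset, hA.diff (.iUnion hbad),
    (tsub_pos_of_lt hμbad).trans_le le_measure_sdiff, fun k => ⟨f k, hfS k, fun ω hω => ?_⟩⟩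
  exact not_le.1 fun hle => hω.2 (mem_iUnion_of_mem k hle)

end ConvergenceInMeasure

section PointwiseConvergence

variable {Z : Type*} [NormedAddCommGroup Z] [NormedSpace ℝ Z]

lemma continuous_apply_induced {V I Y : Type*} [TopologicalSpace Y] (φ : V → I → Y) (i : I) :
    @Continuous _ _ (.induced φ Pi.topologicalSpace) _ (fun v => φ v i) := by
  let _ : TopologicalSpace V := .induced φ Pi.topologicalSpace
  exact (continuous_apply i).comp (continuous_induced_dom (f := φ))

lemma continuous_eval_wstarTop (z : Z) :
    @Continuous _ _ (wstarTop Z) _ (fun f : Z →L[ℝ] ℝ => f z) :=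
  continuous_apply_induced (fun f : Z →L[ℝ] ℝ => (f : Z → ℝ)) z

variable {X : Submodule ℝ (Z →L[ℝ] ℝ)}

lemma continuous_apply_sigmaTop {x : Z →L[ℝ] ℝ} (hx : x ∈ X) :
    @Continuous _ _ (sigmaTop X) _ x :=
  continuous_apply_induced (fun (z : Z) (y : X) => (y : Z →L[ℝ] ℝ) z) ⟨x, hx⟩

lemma tendsto_apply_sub_of_tendsto_sigmaTop {ι : Type*} {l : Filter ι} {z : ι → Z} {z₀ : Z}
    (hz : Tendsto z l (@nhds _ (sigmaTop X) z₀)) {x : Z →L[ℝ] ℝ} (hx : x ∈ X) :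
    Tendsto (fun i => x (z i - z₀)) l (𝓝 0) := by
  let _ := sigmaTop X
  have hxz : Tendsto (fun i => x (z i)) l (𝓝 (x z₀)) :=
    ((continuous_apply_sigmaTop hx).tendsto z₀).comp hz
  simpa only [map_sub, sub_self] using hxz.sub_const (x z₀)

lemma exists_forall_norm_apply_le_of_pointwise_bounded {E F : Type*} [NormedAddCommGroup E]
    [NormedSpace ℝ E] [CompleteSpace E] [NormedAddCommGroup F] [NormedSpace ℝ F]
    {Y : Submodule ℝ E} (hY : IsClosed (Y : Set E)) {ι : Type*} {g : ι → E →L[ℝ] F}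
    (hg : ∀ y ∈ Y, ∃ C, ∀ i, ‖g i y‖ ≤ C) : ∃ C, ∀ i, ∀ y ∈ Y, ‖y‖ ≤ 1 → ‖g i y‖ ≤ C := by
  have : CompleteSpace Y := hY.completeSpace_coe
  obtain ⟨C, hC⟩ : ∃ C, ∀ i, ‖(g i).comp Y.subtypeL‖ ≤ C := banach_steinhaus fun y => hg y y.2
  exact ⟨C, fun i y hy hy₁ =>
    (((g i).comp Y.subtypeL).unit_le_opNorm ⟨y, hy⟩ hy₁).trans (hC i)⟩

lemma IsNorming.exists_norm_le_of_pointwise_bounded (hX : IsNorming X)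
    (hXclosed : IsClosed (X : Set (Z →L[ℝ] ℝ))) {ι : Type*} {z : ι → Z}
    (hz : ∀ x ∈ X, ∃ C, ∀ i, ‖x (z i)‖ ≤ C) : ∃ M, ∀ i, ‖z i‖ ≤ M := by
  obtain ⟨C, hC⟩ := exists_forall_norm_apply_le_of_pointwise_bounded hXclosed
    (g := fun i => NormedSpace.inclusionInDoubleDual ℝ Z (z i)) hz
  obtain ⟨c, hc, hnorm⟩ := hX
  refine ⟨C / c, fun i => ?_⟩
  rw [le_div_iff₀' hc]
  refine (hnorm (z i)).trans (csSup_le ⟨0, 0, X.zero_mem, by simp, by simp⟩ ?_)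
  rintro _ ⟨x, hx, hx₁, rfl⟩
  exact (le_abs_self _).trans (hC i x hx hx₁)

end PointwiseConvergence

section Bidual

variable {Z : Type*} [NormedAddCommGroup Z] [NormedSpace ℝ Z]

/-- The canonical map of `Z` into its bidual, the latter carrying the weak* topology. -/
def toWeakBidual : Z →ₗ[ℝ] WeakDual ℝ (StrongDual ℝ Z) :=
  StrongDual.toWeakDual.toLinearMap ∘ₗ (NormedSpace.inclusionInDoubleDual ℝ Z).toLinearMap

lemma exists_tendsto_toWeakBidual {ι : Type*} {z : ι → Z} {M : ℝ} (hM : ∀ i, ‖z i‖ ≤ M)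
    (U : Ultrafilter ι) : ∃ ψ, Tendsto (fun i => toWeakBidual (z i)) U (𝓝 ψ) := by
  have hball (i : ι) : toWeakBidual (z i) ∈
      WeakDual.toStrongDual ⁻¹' Metric.closedBall (0 : StrongDual ℝ (StrongDual ℝ Z)) M := by
    change NormedSpace.inclusionInDoubleDual ℝ Z (z i) ∈ Metric.closedBall 0 M
    exact (mem_closedBall_zero_iff (E := StrongDual ℝ (StrongDual ℝ Z))).2
      ((NormedSpace.double_dual_bound ℝ Z (z i)).trans (hM i))
  obtain ⟨ψ, -, hψ⟩ := (WeakDual.isCompact_closedBall 0 M).ultrafilter_le_nhds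
    (U.map fun i => toWeakBidual (z i)) (tendsto_principal.2 (.of_forall hball))
  exact ⟨ψ, hψ⟩

end Bidual

section ConditionG

variable {Ω : Type*} [MeasurableSpace Ω] {μ : Measure Ω} [IsFiniteMeasure μ]
variable {Z : Type*} [NormedAddCommGroup Z] [NormedSpace ℝ Z] {ν : VectorMeasure Ω (Z →L[ℝ] ℝ)}

lemma le_apply_of_mem_closure_convexHull_avgRange {A : Set Ω} {w : Z} {δ : ℝ}
    (hA : ∀ C ⊆ A, MeasurableSet C → δ * μ.real C ≤ ν C w) {x : Z →L[ℝ] ℝ}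
    (hx : x ∈ @closure _ (wstarTop Z) (convexHull ℝ (avgRange μ ν A))) : δ ≤ x w := by
  have havg : avgRange μ ν A ⊆ {y | δ ≤ y w} := by
    rintro _ ⟨C, hC, hCA, hμC, rfl⟩
    change δ ≤ (μ C).toReal⁻¹ * ν C w
    rw [le_inv_mul_iff₀' (ENNReal.toReal_pos hμC.ne' (measure_ne_top μ C))]
    exact hA C hCA hC
  have hconvex : Convex ℝ {y : Z →L[ℝ] ℝ | δ ≤ y w} :=
    convex_halfSpace_ge (ContinuousLinearMap.apply ℝ ℝ w).toLinearMap.isLinear δ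
  let _ := wstarTop Z
  exact closure_minimal (convexHull_min havg hconvex)
    (isClosed_le continuous_const (continuous_eval_wstarTop w)) hx

lemma exists_measurableSet_forall_mul_measureReal_le_apply (hν : ν ≪ᵥ μ.toENNRealVectorMeasure)
    {ι : Type*} [Countable ι] {K : ι → Set Z} (hK : ∀ k, Convex ℝ (K k))
    {ψ : WeakDual ℝ (StrongDual ℝ Z)} (hψ : ∀ k, ψ ∈ closure (toWeakBidual '' K k))
    {B : Set Ω} (hB : MeasurableSet B) (hpos : 0 < ψ (ν B)) :
    ∃ δ > 0, ∃ A, MeasurableSet A ∧ 0 < μ A ∧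
      ∀ k, ∃ w ∈ K k, ∀ C ⊆ A, MeasurableSet C → δ * μ.real C ≤ ν C w := by
  let D := dualDensity ν hν
  obtain ⟨δ, hδ, A, -, hA, hμA, hδA⟩ := exists_measurableSet_forall_le_of_setIntegral_pos
    (Lp.stronglyMeasurable (D (WeakDual.toStrongDual ψ))).measurable hB (measure_ne_top μ B)
    (hpos.trans_eq (setIntegral_dualDensity hν _ hB).symm)
  obtain ⟨A', hA'A, hA', hμA', happrox⟩ := exists_measurableSet_forall_dist_lt_of_mem_closure
    (fun k => dualDensity_mem_closure_image hν ((hK k).linear_image toWeakBidual) (hψ k))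
    hA hμA (half_pos hδ)
  refine ⟨δ / 2, half_pos hδ, A', hA', hμA', fun k => ?_⟩
  obtain ⟨_, ⟨_, ⟨w, hw, rfl⟩, rfl⟩, hclose⟩ := happrox k
  refine ⟨w, hw, fun C hC hCmeas => ?_⟩
  have hdensity : ∀ ω ∈ C, δ / 2 ≤ D (WeakDual.toStrongDual (toWeakBidual w)) ω := fun ω hω => by
    have hdist := (abs_lt.1 (hclose ω (hC hω))).1
    linarith [hδA ω (hA'A (hC hω))]
  calc δ / 2 * μ.real C
      ≤ ∫ ω in C, D (WeakDual.toStrongDual (toWeakBidual w)) ω ∂μ :=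
        setIntegral_ge_of_const_le_real hCmeas (measure_ne_top μ C) hdensity
          (L1.integrable_coeFn _).integrableOn
    _ = ν C w := setIntegral_dualDensity hν _ hCmeas

variable {X : Submodule ℝ (Z →L[ℝ] ℝ)}

lemma CondG.apply_nonpos (hG : CondG μ ν X) (hν : ν ≪ᵥ μ.toENNRealVectorMeasure)
    {ι : Type*} [Countable ι] {K : ι → Set Z} (hK : ∀ k, Convex ℝ (K k))
    (hKX : ∀ x ∈ X, ∀ ε > 0, ∃ k, ∀ w ∈ K k, x w < ε)
    {ψ : WeakDual ℝ (StrongDual ℝ Z)} (hψ : ∀ k, ψ ∈ closure (toWeakBidual '' K k))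
    {B : Set Ω} (hB : MeasurableSet B) : ψ (ν B) ≤ 0 := by
  by_contra! hpos
  obtain ⟨δ, hδ, A, hA, hμA, hδA⟩ :=
    exists_measurableSet_forall_mul_measureReal_le_apply hν hK hψ hB hpos
  obtain ⟨x, hxclosure, hxX⟩ := hG A hA hμA
  obtain ⟨k, hk⟩ := hKX x hxX δ hδ
  obtain ⟨w, hw, hνw⟩ := hδA k
  exact (hk w hw).not_ge (le_apply_of_mem_closure_convexHull_avgRange hνw hxclosure)

lemma CondG.apply_nonpos_of_tendsto (hG : CondG μ ν X) (hν : ν ≪ᵥ μ.toENNRealVectorMeasure)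
    {z : ℕ → Z} (hz : ∀ x ∈ X, Tendsto (fun n => x (z n)) atTop (𝓝 0))
    {l : Filter ℕ} [l.NeBot] (hl : l ≤ atTop) {ψ : WeakDual ℝ (StrongDual ℝ Z)}
    (hψ : Tendsto (fun n => toWeakBidual (z n)) l (𝓝 ψ))
    {B : Set Ω} (hB : MeasurableSet B) : ψ (ν B) ≤ 0 := by
  refine hG.apply_nonpos hν (K := fun k => convexHull ℝ (z '' Ici k))
    (fun k => convex_convexHull ℝ _) (fun x hx ε hε => ?_) (fun k => ?_) hB
  · obtain ⟨k, hk⟩ := eventually_atTop.1 ((hz x hx).eventually_lt_const hε)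
    have htail : z '' Ici k ⊆ {w | x w < ε} := image_subset_iff.2 hk
    exact ⟨k, convexHull_min htail (convex_halfSpace_lt x.toLinearMap.isLinear ε)⟩
  · refine mem_closure_of_tendsto hψ (mem_of_superset (hl (Ici_mem_atTop k)) fun n hn => ?_)
    exact mem_image_of_mem _ (subset_convexHull ℝ _ (mem_image_of_mem z hn))

lemma CondG.apply_eq_zero_of_tendsto (hG : CondG μ ν X) (hν : ν ≪ᵥ μ.toENNRealVectorMeasure)
    {z : ℕ → Z} (hz : ∀ x ∈ X, Tendsto (fun n => x (z n)) atTop (𝓝 0))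
    {l : Filter ℕ} [l.NeBot] (hl : l ≤ atTop) {ψ : WeakDual ℝ (StrongDual ℝ Z)}
    (hψ : Tendsto (fun n => toWeakBidual (z n)) l (𝓝 ψ))
    {B : Set Ω} (hB : MeasurableSet B) : ψ (ν B) = 0 := by
  refine le_antisymm (hG.apply_nonpos_of_tendsto hν hz hl hψ hB) (neg_nonpos.1 ?_)
  exact hG.apply_nonpos_of_tendsto hν (z := -z) (ψ := -ψ)
    (fun x hx => by simpa using (hz x hx).neg) hl (by simpa using hψ.neg) hB

lemma CondG.tendsto_apply_zero (hG : CondG μ ν X) (hν : ν ≪ᵥ μ.toENNRealVectorMeasure)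
    {z : ℕ → Z} {M : ℝ} (hM : ∀ n, ‖z n‖ ≤ M)
    (hz : ∀ x ∈ X, Tendsto (fun n => x (z n)) atTop (𝓝 0))
    {B : Set Ω} (hB : MeasurableSet B) : Tendsto (fun n => ν B (z n)) atTop (𝓝 0) := by
  refine (tendsto_iff_ultrafilter _ _ _).2 fun U hU => ?_
  obtain ⟨ψ, hψ⟩ := exists_tendsto_toWeakBidual hM U
  rw [← hG.apply_eq_zero_of_tendsto hν hz hU hψ hB]
  exact ((WeakDual.eval_continuous (ν B)).tendsto ψ).comp hψ

end ConditionG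

theorem seqContinuous_of_condG_general
    {Ω : Type*} [MeasurableSpace Ω] (μ : Measure Ω) [IsFiniteMeasure μ]
    {Z : Type*} [NormedAddCommGroup Z] [NormedSpace ℝ Z]
    (X : Submodule ℝ (Z →L[ℝ] ℝ)) (hXclosed : IsClosed (X : Set (Z →L[ℝ] ℝ)))
    (hXnorming : IsNorming X)
    (ν : VectorMeasure Ω (Z →L[ℝ] ℝ))
    (hν : ∀ A : Set Ω, μ A = 0 → ν A = 0)
    (hG : CondG μ ν X) :
    ∀ B : Set Ω, MeasurableSet B →
      ∀ (z : ℕ → Z) (z₀ : Z), Tendsto z atTop (@nhds _ (sigmaTop X) z₀) →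
        Tendsto (fun n => ν B (z n)) atTop (nhds (ν B z₀)) := by
  intro B hB z z₀ hz
  have hνμ : ν ≪ᵥ μ.toENNRealVectorMeasure := .mk fun A hA hμA =>
    hν A (by rwa [Measure.toENNRealVectorMeasure_apply_measurable hA] at hμA)
  have hnull : ∀ x ∈ X, Tendsto (fun n => x (z n - z₀)) atTop (𝓝 0) := fun x hx =>
    tendsto_apply_sub_of_tendsto_sigmaTop hz hx
  obtain ⟨M, hM⟩ : ∃ M, ∀ n, ‖z n - z₀‖ ≤ M :=
    hXnorming.exists_norm_le_of_pointwise_bounded hXclosed fun x hx =>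
      let ⟨C, hC⟩ := (hnull x hx).norm.bddAbove_range
      ⟨C, fun n => hC ⟨n, rfl⟩⟩
  have hνnull : Tendsto (fun n => ν B (z n - z₀)) atTop (𝓝 0) :=
    hG.tendsto_apply_zero hνμ hM hnull hB
  simpa only [map_sub, tendsto_sub_nhds_zero_iff] using hνnull

/-- If `ν ∈ ca(μ, Z*)` satisfies condition (G), then `ν(B)` is `σ(Z,X)`-sequentially
continuous for every `B ∈ Σ`. -/
theorem seqContinuous_of_condG
    {Ω : Type*} [MeasurableSpace Ω] (μ : Measure Ω) [IsFiniteMeasure μ]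
    {Z : Type*} [NormedAddCommGroup Z] [NormedSpace ℝ Z] [CompleteSpace Z]
    (X : Submodule ℝ (Z →L[ℝ] ℝ)) (hXclosed : IsClosed (X : Set (Z →L[ℝ] ℝ)))
    (hXnorming : IsNorming X)
    (ν : VectorMeasure Ω (Z →L[ℝ] ℝ))
    (hν : ∀ A : Set Ω, μ A = 0 → ν A = 0)
    (hG : CondG μ ν X) :
    ∀ B : Set Ω, MeasurableSet B →
      ∀ (z : ℕ → Z) (z₀ : Z), Tendsto z atTop (@nhds _ (sigmaTop X) z₀) →
        Tendsto (fun n => ν B (z n)) atTop (nhds (ν B z₀)) :=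
  seqContinuous_of_condG_general μ X hXclosed hXnorming ν hν hG
end
end

section
/- Let (Ω,Σ,μ) be a finite measure space and (g_n) a uniformly integrable sequence in L¹(μ) for which there exist ε > 0 and B ∈ Σ with μ(B) > 0 such that ∫_B g_n dμ ≥ ε for all n ∈ ℕ. Then there exist a convex block subsequence (h_k) of (g_n), a real number η > 0, and A ∈ Σ with A ⊆ B and μ(A) > 0, such that h_k ≥ η on A for all k ∈ ℕ. -/
open MeasureTheory Filter Set Topology
open scoped UniformConvergence

noncomputable section

/-!
By Dunford–Pettis and Mazur, some convex blocks `h k` of `g` converge in `L¹` to a function `a` with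
`ε ≤ ∫_B a`, and they can be chosen with `∑ ‖h k - a‖ ≤ ε / 2`. In the Banach lattice `L¹` the
function `b = a - ∑ |h k - a|` then lies below every `h k` and still has positive integral over `B`,
so that `b` is bounded below by some `η > 0` on a non-null subset of `B`.

The half of Dunford–Pettis that is needed, weak convergence along an ultrafilter, comes from `L²`:
truncation approximates a uniformly integrable family uniformly in `L¹` by families bounded in
`L²`, which converge weakly along every ultrafilter, and weak convergence along a fixed ultrafilter
survives uniform approximation.
-/

/-- Weak convergence of `x` to `a` along `l`, tested on continuous linear functionals rather than
through the topology of `WeakSpace`. The filter is arbitrary so that limits of bounded families can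
be taken along ultrafilters. -/
def TendstoWeakly {ι E : Type*} [NormedAddCommGroup E] [NormedSpace ℝ E]
    (x : ι → E) (l : Filter ι) (a : E) : Prop :=
  ∀ φ : StrongDual ℝ E, Tendsto (fun i => φ (x i)) l (𝓝 (φ a))

namespace TendstoWeakly

variable {ι E F : Type*} [NormedAddCommGroup E] [NormedSpace ℝ E] [NormedAddCommGroup F]
  [NormedSpace ℝ F] {x y : ι → E} {l : Filter ι} {a b : E}

theorem map (h : TendstoWeakly x l a) (T : E →L[ℝ] F) :
    TendstoWeakly (fun i => T (x i)) l (T a) :=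
  fun φ => h (φ.comp T)

theorem sub (hx : TendstoWeakly x l a) (hy : TendstoWeakly y l b) :
    TendstoWeakly (fun i => x i - y i) l (a - b) := fun φ => by
  simpa only [map_sub] using (hx φ).sub (hy φ)

theorem mem_of_convex_of_isClosed [l.NeBot] {s : Set E} (h : TendstoWeakly x l a)
    (hconv : Convex ℝ s) (hclosed : IsClosed s) (hs : ∀ᶠ i in l, x i ∈ s) : a ∈ s := by
  by_contra ha
  obtain ⟨φ, u, hφs, hφa⟩ := geometric_hahn_banach_closed_point hconv hclosed ha
  exact hφa.not_ge (le_of_tendsto (h φ) (hs.mono fun i hi => (hφs _ hi).le))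

theorem mem_closure_convexHull [l.NeBot] {s : Set E} (h : TendstoWeakly x l a)
    (hs : ∀ᶠ i in l, x i ∈ s) : a ∈ closure (convexHull ℝ s) :=
  h.mem_of_convex_of_isClosed (convex_convexHull ℝ s).closure isClosed_closure
    (hs.mono fun _ hi => subset_closure (subset_convexHull ℝ s hi))

theorem norm_le [l.NeBot] {C : ℝ} (h : TendstoWeakly x l a) (hC : ∀ᶠ i in l, ‖x i‖ ≤ C) :
    ‖a‖ ≤ C :=
  mem_closedBall_zero_iff.1 <|
    h.mem_of_convex_of_isClosed (convex_closedBall 0 C) Metric.isClosed_closedBall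
      (hC.mono fun _ => mem_closedBall_zero_iff.2)

end TendstoWeakly

theorem tendstoWeakly_of_tendsto_of_forall_norm_sub_le {ι κ E : Type*} [NormedAddCommGroup E]
    [NormedSpace ℝ E] {l : Filter ι} {l' : Filter κ} [l'.NeBot] {x : ι → E} {y : κ → ι → E}
    {b : κ → E} {a : E} {r : κ → ℝ} (hr : Tendsto r l' (𝓝 0))
    (hxy : ∀ m i, ‖x i - y m i‖ ≤ r m) (hy : ∀ m, TendstoWeakly (y m) l (b m))
    (hb : Tendsto b l' (𝓝 a)) : TendstoWeakly x l a := by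
  intro φ
  have huniform : TendstoUniformly (fun m i => φ (y m i)) (fun i => φ (x i)) l' := by
    rw [Metric.tendstoUniformly_iff]
    intro ε hε
    have hφr : Tendsto (fun m => ‖φ‖ * r m) l' (𝓝 0) := by simpa using hr.const_mul ‖φ‖
    filter_upwards [hφr.eventually_lt_const hε] with m hm i
    calc dist (φ (x i)) (φ (y m i)) = ‖φ (x i - y m i)‖ := by rw [dist_eq_norm, map_sub]
      _ ≤ ‖φ‖ * ‖x i - y m i‖ := φ.le_opNorm _
      _ ≤ ‖φ‖ * r m := by gcongr; exact hxy m i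
      _ < ε := hm
  exact huniform.tendsto_of_eventually_tendsto (Eventually.of_forall fun m => hy m φ)
    ((φ.continuous.tendsto a).comp hb)

theorem exists_tendstoWeakly_of_forall_norm_sub_le {ι E : Type*} [NormedAddCommGroup E]
    [NormedSpace ℝ E] [CompleteSpace E] {l : Filter ι} [l.NeBot] {x : ι → E}
    (h : ∀ ε > 0, ∃ y b, (∀ i, ‖x i - y i‖ ≤ ε) ∧ TendstoWeakly y l b) :
    ∃ a, TendstoWeakly x l a := by
  obtain ⟨r, hr_anti, hr_pos, hr⟩ := exists_seq_strictAnti_tendsto (0 : ℝ)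
  choose y b hxy hy using fun m => h (r m) (hr_pos m)
  have hdist (m n) : dist (b m) (b n) ≤ r m + r n := by
    rw [dist_eq_norm]
    refine ((hy m).sub (hy n)).norm_le (Eventually.of_forall fun i => ?_)
    calc ‖y m i - y n i‖ ≤ ‖y m i - x i‖ + ‖x i - y n i‖ := norm_sub_le_norm_sub_add_norm_sub ..
      _ ≤ r m + r n := add_le_add (norm_sub_rev (x i) _ ▸ hxy m i) (hxy n i)
  have hcauchy : CauchySeq b := by
    refine cauchySeq_of_le_tendsto_0 (fun N => r N + r N) ?_ ?_
    · intro m n N hm hn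
      exact (hdist m n).trans (add_le_add (hr_anti.antitone hm) (hr_anti.antitone hn))
    · simpa using hr.add hr
  obtain ⟨a, ha⟩ := cauchySeq_tendsto_of_complete hcauchy
  exact ⟨a, tendstoWeakly_of_tendsto_of_forall_norm_sub_le hr hxy hy ha⟩

theorem exists_tendstoWeakly_ultrafilter_of_norm_le {ι H : Type*} [NormedAddCommGroup H]
    [InnerProductSpace ℝ H] [CompleteSpace H] {x : ι → H} {C : ℝ} (hx : ∀ i, ‖x i‖ ≤ C)
    (U : Ultrafilter ι) : ∃ a, TendstoWeakly x U a := by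
  let riesz (z : H) : WeakDual ℝ H := StrongDual.toWeakDual (InnerProductSpace.toDual ℝ H z)
  have hball : ∀ i, riesz (x i) ∈ WeakDual.toStrongDual ⁻¹' Metric.closedBall 0 C := fun i => by
    simpa [riesz] using hx i
  obtain ⟨ψ, -, hψ⟩ := (WeakDual.isCompact_closedBall (0 : StrongDual ℝ H) C).ultrafilter_le_nhds
    (U.map fun i => riesz (x i)) (tendsto_principal.2 (Eventually.of_forall hball))
  refine ⟨(InnerProductSpace.toDual ℝ H).symm (WeakDual.toStrongDual ψ), fun φ => ?_⟩
  obtain ⟨z, rfl⟩ := (InnerProductSpace.toDual ℝ H).surjective φ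
  simpa [riesz, Function.comp_def, real_inner_comm _ z] using
    ((WeakDual.eval_continuous z).tendsto ψ).comp hψ

theorem exists_forall_le_of_summable_norm_sub {ι E : Type*} [NormedAddCommGroup E] [Lattice E]
    [HasSolidNorm E] [IsOrderedAddMonoid E] [CompleteSpace E] {x : ι → E} {a : E}
    (h : Summable fun i => ‖x i - a‖) :
    ∃ b, (∀ i, b ≤ x i) ∧ ‖a - b‖ ≤ ∑' i, ‖x i - a‖ := by
  have habs : Summable fun i => ‖|x i - a|‖ := by simpa only [norm_abs_eq_norm] using h
  refine ⟨a - ∑' i, |x i - a|, fun i => ?_, ?_⟩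
  · have hle : |x i - a| ≤ ∑' j, |x j - a| :=
      habs.of_norm.le_tsum i fun j _ => abs_nonneg (x j - a)
    calc a - ∑' j, |x j - a| ≤ a - |x i - a| := sub_le_sub_left hle a
      _ ≤ x i := by rw [sub_le_comm, ← neg_sub]; exact neg_le_abs (x i - a)
  · simpa only [sub_sub_cancel, norm_abs_eq_norm] using norm_tsum_le_tsum_norm habs

theorem exists_finset_sum_smul_eq_of_mem_convexHull_image {ι E : Type*} [AddCommGroup E]
    [Module ℝ E] {g : ι → E} {s : Set ι} {x : E} (hx : x ∈ convexHull ℝ (g '' s)) :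
    ∃ (t : Finset ι) (w : ι → ℝ), ↑t ⊆ s ∧ (∀ i ∈ t, 0 ≤ w i) ∧ ∑ i ∈ t, w i = 1 ∧
      ∑ i ∈ t, w i • g i = x := by
  classical
  rw [image_eq_range, convexHull_range_eq_exists_affineCombination] at hx
  obtain ⟨t, w, hw_nonneg, hw_sum, rfl⟩ := hx
  refine ⟨t.map (Function.Embedding.subtype _), fun i => if hi : i ∈ s then w ⟨i, hi⟩ else 0,
    ?_, ?_, ?_, ?_⟩
  · simp
  · simpa +contextual using hw_nonneg
  · simpa using hw_sum
  · rw [Finset.affineCombination_eq_linear_combination _ _ _ hw_sum]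
    simp

theorem convexBlock_sum_of_subset_Ico {E : Type*} [AddCommMonoid E] [Module ℝ E] (g : ℕ → E)
    {b : ℕ → ℕ} (hb : Monotone b) {I : ℕ → Finset ℕ} (hI : ∀ k, ↑(I k) ⊆ Ico (b k) (b (k + 1)))
    {w : ℕ → ℕ → ℝ} (hw_nonneg : ∀ k, ∀ n ∈ I k, 0 ≤ w k n) (hw_sum : ∀ k, ∑ n ∈ I k, w k n = 1) :
    ConvexBlock g fun k => ∑ n ∈ I k, w k n • g n := by
  classical
  let a (n : ℕ) : ℝ := if hn : ∃ k, n ∈ I k then w hn.choose n else 0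
  have ha (k n : ℕ) (hn : n ∈ I k) : a n = w k n := by
    have hex : ∃ k, n ∈ I k := ⟨k, hn⟩
    have hchoose : hex.choose = k := by
      by_contra hne
      exact disjoint_left.1 (hb.pairwise_disjoint_on_Ico_succ hne) (hI _ hex.choose_spec) (hI k hn)
    simp only [a, dif_pos hex, hchoose]
  refine ⟨I, a, fun k n hn m hm => (hI k hn).2.trans_le (hI (k + 1) hm).1, fun n => ?_,
    fun k => ?_, fun k => ?_⟩
  · by_cases hn : ∃ k, n ∈ I k
    · obtain ⟨k, hk⟩ := hn
      exact (ha k n hk).symm ▸ hw_nonneg k n hk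
    · exact ge_of_eq (dif_neg hn)
  · rw [Finset.sum_congr rfl (ha k), hw_sum k]
  · exact Finset.sum_congr rfl fun n hn => by rw [ha k n hn]

theorem exists_convexBlock_forall_mem {E : Type*} [AddCommGroup E] [Module ℝ E] {g : ℕ → E}
    {S : ℕ → Set E} (hS : ∀ k N, (convexHull ℝ (g '' Ici N) ∩ S k).Nonempty) :
    ∃ h, ConvexBlock g h ∧ ∀ k, h k ∈ S k := by
  have hblock (k N : ℕ) : ∃ N' ≥ N, ∃ (I : Finset ℕ) (w : ℕ → ℝ), ↑I ⊆ Ico N N' ∧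
      (∀ n ∈ I, 0 ≤ w n) ∧ ∑ n ∈ I, w n = 1 ∧ ∑ n ∈ I, w n • g n ∈ S k := by
    obtain ⟨x, hx, hxS⟩ := hS k N
    obtain ⟨I, w, hI, hw_nonneg, hw_sum, rfl⟩ :=
      exists_finset_sum_smul_eq_of_mem_convexHull_image hx
    have hlt (n) (hn : n ∈ I) : n < I.sup id + 1 := Nat.lt_succ_of_le (Finset.le_sup (f := id) hn)
    exact ⟨max N (I.sup id + 1), le_max_left _ _, I, w,
      fun n hn => ⟨hI hn, lt_max_of_lt_right (hlt n hn)⟩, hw_nonneg, hw_sum, hxS⟩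
  choose next hnext I w hI hw_nonneg hw_sum hmem using hblock
  let b : ℕ → ℕ := fun k => Nat.rec 0 next k
  exact ⟨_, convexBlock_sum_of_subset_Ico g (monotone_nat_of_le_succ fun k => hnext k (b k))
    (fun k => hI k (b k)) (fun k => hw_nonneg k (b k)) (fun k => hw_sum k (b k)),
    fun k => hmem k (b k)⟩

theorem TendstoWeakly.exists_convexBlock_dist_lt {E : Type*} [NormedAddCommGroup E]
    [NormedSpace ℝ E] {x : ℕ → E} {a : E} {l : Filter ℕ} [l.NeBot] (hx : TendstoWeakly x l a)
    (hl : l ≤ atTop) {r : ℕ → ℝ} (hr : ∀ k, 0 < r k) :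
    ∃ h, ConvexBlock x h ∧ ∀ k, dist (h k) a < r k := by
  refine exists_convexBlock_forall_mem (S := fun k => Metric.ball a (r k)) fun k N => ?_
  have ha : a ∈ closure (convexHull ℝ (x '' Ici N)) :=
    hx.mem_closure_convexHull (((eventually_ge_atTop N).filter_mono hl).mono
      fun n hn => mem_image_of_mem x hn)
  rw [inter_comm]
  exact mem_closure_iff_nhds.1 ha _ (Metric.ball_mem_nhds a (hr k))

theorem TendstoWeakly.exists_convexBlock_tsum_norm_sub_le {E : Type*} [NormedAddCommGroup E]
    [NormedSpace ℝ E] {x : ℕ → E} {a : E} {l : Filter ℕ} [l.NeBot] (hx : TendstoWeakly x l a)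
    (hl : l ≤ atTop) {ε : ℝ} (hε : 0 < ε) :
    ∃ h, ConvexBlock x h ∧ Summable (fun k => ‖h k - a‖) ∧ ∑' k, ‖h k - a‖ ≤ ε := by
  obtain ⟨r, hr_pos, c, hr, hcε⟩ := posSumOfEncodable hε ℕ
  obtain ⟨h, hxh, hdist⟩ := hx.exists_convexBlock_dist_lt hl hr_pos
  have hnorm (k) : ‖h k - a‖ ≤ r k := dist_eq_norm (h k) a ▸ (hdist k).le
  have hsummable : Summable fun k => ‖h k - a‖ :=
    .of_nonneg_of_le (fun k => norm_nonneg _) hnorm hr.summable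
  exact ⟨h, hxh, hsummable, (hasSum_le hnorm hsummable.hasSum hr).trans hcε⟩

section MeasureSpace

open scoped ENNReal

variable {Ω : Type*} [MeasurableSpace Ω] {μ : Measure Ω}

theorem ConvexBlock.exists_ae_eq_of_toLp {E : Type*} [NormedAddCommGroup E] [NormedSpace ℝ E]
    {p : ℝ≥0∞} {g : ℕ → Ω → E} (hg : ∀ n, MemLp (g n) p μ) {H : ℕ → Lp E p μ}
    (hH : ConvexBlock (fun n => (hg n).toLp) H) :
    ∃ h, ConvexBlock g h ∧ ∀ k, h k =ᵐ[μ] H k := by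
  obtain ⟨I, a, hI, ha_nonneg, ha_sum, hH⟩ := hH
  refine ⟨_, ⟨I, a, hI, ha_nonneg, ha_sum, fun k => rfl⟩, fun k => ?_⟩
  rw [hH k]
  calc ∑ n ∈ I k, a n • g n
      =ᵐ[μ] ∑ n ∈ I k, ⇑(a n • (hg n).toLp) := by
        refine eventuallyEq_sum fun n _ => ?_
        filter_upwards [Lp.coeFn_smul (a n) (hg n).toLp, (hg n).coeFn_toLp] with ω hsmul hω
        rw [hsmul, Pi.smul_apply, Pi.smul_apply, hω]
    _ =ᵐ[μ] ⇑(∑ n ∈ I k, a n • (hg n).toLp) := (Lp.coeFn_finsetSum _ _).symm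

theorem exists_pos_le_on_of_setIntegral_pos {f : Ω → ℝ} {B : Set Ω}
    (hf : AEMeasurable f μ) (hB : MeasurableSet B) (hpos : 0 < ∫ ω in B, f ω ∂μ) :
    ∃ η > 0, ∃ A, MeasurableSet A ∧ A ⊆ B ∧ 0 < μ A ∧ ∀ᵐ ω ∂μ, ω ∈ A → η ≤ f ω := by
  obtain ⟨u, -, hu_pos, hu⟩ := exists_seq_strictAnti_tendsto (0 : ℝ)
  let A (n : ℕ) : Set Ω := B ∩ {ω | u n ≤ hf.mk f ω}
  have hA (n) : MeasurableSet (A n) :=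
    hB.inter (measurableSet_le measurable_const hf.measurable_mk)
  obtain ⟨n, hn⟩ : ∃ n, 0 < μ (A n) := by
    by_contra! hnull
    have hnonpos : ∀ᵐ ω ∂μ, ω ∈ B → f ω ≤ 0 := by
      filter_upwards [hf.ae_eq_mk, ae_all_iff.2 fun n =>
        measure_eq_zero_iff_ae_notMem.1 (nonpos_iff_eq_zero.1 (hnull n))] with ω hω hAω hωB
      exact ge_of_tendsto' hu fun n => hω ▸ (not_le.1 fun hle => hAω n ⟨hωB, hle⟩).le
    exact hpos.not_ge (setIntegral_nonpos_of_ae_restrict ((ae_restrict_iff' hB).2 hnonpos))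
  refine ⟨u n, hu_pos n, A n, hA n, inter_subset_left, hn, ?_⟩
  filter_upwards [hf.ae_eq_mk] with ω hω hωA
  exact hω ▸ hωA.2

theorem norm_inclusion_lp_le {E : Type*} [NormedAddCommGroup E] [IsFiniteMeasure μ] {p q : ℝ≥0∞}
    (hp : p ≠ 0) (hpq : p ≤ q) (f : Lp E q μ) :
    ‖AddSubgroup.inclusion (Lp.antitone hpq) f‖ ≤
      (μ univ ^ (1 / p.toReal - 1 / q.toReal)).toReal * ‖f‖ := by
  have hexp : 0 ≤ 1 / p.toReal - 1 / q.toReal := by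
    simpa only [one_div, sub_nonneg, ENNReal.toReal_inv] using
      ENNReal.toReal_mono (ENNReal.inv_ne_top.2 hp) (ENNReal.inv_le_inv.2 hpq)
  have hfinite : μ univ ^ (1 / p.toReal - 1 / q.toReal) ≠ ∞ :=
    ENNReal.rpow_ne_top_of_nonneg hexp (measure_ne_top μ univ)
  rw [Lp.norm_def, Lp.norm_def, mul_comm, ← ENNReal.toReal_mul]
  exact ENNReal.toReal_mono (ENNReal.mul_ne_top (Lp.eLpNorm_ne_top f) hfinite)
    (eLpNorm_le_eLpNorm_mul_rpow_measure_univ hpq (Lp.aestronglyMeasurable f))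

/-- The inclusion of `L^q` into `L^p` for `p ≤ q` over a finite measure, which transfers weak limits
from the Hilbert space `L²` to `L¹`. -/
def lpInclusion (E : Type*) [NormedAddCommGroup E] [NormedSpace ℝ E] (μ : Measure Ω)
    [IsFiniteMeasure μ] {p q : ℝ≥0∞} [Fact (1 ≤ p)] [Fact (1 ≤ q)] (hpq : p ≤ q) :
    Lp E q μ →L[ℝ] Lp E p μ :=
  LinearMap.mkContinuous
    { toFun := AddSubgroup.inclusion (Lp.antitone hpq)
      map_add' := map_add _
      map_smul' := fun _ _ => Subtype.ext rfl }
    _ (norm_inclusion_lp_le (zero_lt_one.trans_le Fact.out).ne' hpq)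

theorem exists_norm_le_norm_sub_lpInclusion_le {ι E : Type*} [NormedAddCommGroup E]
    [NormedSpace ℝ E] [IsFiniteMeasure μ] {p q : ℝ≥0∞} [Fact (1 ≤ p)] [Fact (1 ≤ q)]
    (hpq : p ≤ q) (hp : p ≠ ∞) {x : ι → Lp E p μ} (hx : UniformIntegrable (fun i => ⇑(x i)) p μ)
    {ε : ℝ} (hε : 0 < ε) :
    ∃ (C : ℝ) (y : ι → Lp E q μ), ∀ i, ‖y i‖ ≤ C ∧ ‖x i - lpInclusion E μ hpq (y i)‖ ≤ ε := by
  obtain ⟨C, hC⟩ := hx.spec (zero_lt_one.trans_le Fact.out).ne' hp hε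
  let s (i : ι) : Set Ω := {ω | C ≤ ‖x i ω‖₊}
  have hs (i) : MeasurableSet (s i) :=
    measurableSet_le measurable_const (Lp.stronglyMeasurable (x i)).nnnorm.measurable
  have hbound (i) (ω) : ‖(s i)ᶜ.indicator (x i) ω‖ ≤ C := by
    by_cases hω : ω ∈ s i
    · simp [hω]
    · simpa [hω] using (not_le.1 hω).le
  have hmem (i) : MemLp ((s i)ᶜ.indicator (x i)) q μ :=
    .of_bound ((Lp.aestronglyMeasurable (x i)).indicator (hs i).compl) C (.of_forall (hbound i))
  refine ⟨measureUnivNNReal μ ^ q.toReal⁻¹ * C, fun i => (hmem i).toLp, fun i => ⟨?_, ?_⟩⟩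
  · refine Lp.norm_le_of_ae_bound C.2 ?_
    filter_upwards [(hmem i).coeFn_toLp] with ω hω
    rw [hω]
    exact hbound i ω
  · have hsub : ⇑(x i - lpInclusion E μ hpq (hmem i).toLp) =ᵐ[μ] (s i).indicator (x i) := by
      filter_upwards [Lp.coeFn_sub (x i) (lpInclusion E μ hpq (hmem i).toLp),
        (hmem i).coeFn_toLp] with ω hω htrunc
      change lpInclusion E μ hpq (hmem i).toLp ω = _ at htrunc
      rw [hω, Pi.sub_apply, htrunc, sub_eq_iff_eq_add, ← Pi.add_apply, indicator_self_add_compl]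
    rw [Lp.norm_def, eLpNorm_congr_ae hsub]
    exact ENNReal.toReal_le_of_le_ofReal hε.le (hC i)

theorem exists_tendstoWeakly_ultrafilter_of_uniformIntegrable {ι E : Type*} [NormedAddCommGroup E]
    [InnerProductSpace ℝ E] [CompleteSpace E] [IsFiniteMeasure μ] {x : ι → Lp E 1 μ}
    (hx : UniformIntegrable (fun i => ⇑(x i)) 1 μ) (U : Ultrafilter ι) :
    ∃ a, TendstoWeakly x U a := by
  refine exists_tendstoWeakly_of_forall_norm_sub_le fun ε hε => ?_
  obtain ⟨C, y, hy⟩ := exists_norm_le_norm_sub_lpInclusion_le (q := 2) one_le_two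
    ENNReal.one_ne_top hx hε
  obtain ⟨b, hb⟩ := exists_tendstoWeakly_ultrafilter_of_norm_le (fun i => (hy i).1) U
  exact ⟨_, _, fun i => (hy i).2, hb.map (lpInclusion E μ one_le_two)⟩

theorem uniformIntegrable_one_of_integral_norm_le {ι E : Type*} [NormedAddCommGroup E]
    {f : ι → Ω → E} (hf : ∀ i, Integrable (f i) μ) {M : ℝ} (hM : ∀ i, ∫ ω, ‖f i ω‖ ∂μ ≤ M)
    (hui : ∀ ε > 0, ∃ δ > 0, ∀ A, MeasurableSet A → μ A ≤ ENNReal.ofReal δ →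
      ∀ i, ∫ ω in A, ‖f i ω‖ ∂μ ≤ ε) :
    UniformIntegrable f 1 μ := by
  refine ⟨fun i => (hf i).aestronglyMeasurable, fun ε hε => ?_, M.toNNReal, fun i => ?_⟩
  · obtain ⟨δ, hδ, hA⟩ := hui ε hε
    refine ⟨δ, hδ, fun i A hA_meas hA_le => ?_⟩
    rw [eLpNorm_indicator_eq_eLpNorm_restrict hA_meas, eLpNorm_one_eq_lintegral_enorm,
      ← ofReal_integral_norm_eq_lintegral_enorm (hf i).integrableOn]
    exact ENNReal.ofReal_le_ofReal (hA A hA_meas hA_le i)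
  · rw [eLpNorm_one_eq_lintegral_enorm, ← ofReal_integral_norm_eq_lintegral_enorm (hf i)]
    exact ENNReal.ofReal_le_ofReal (hM i)

theorem TendstoWeakly.le_setIntegral {ι : Type*} {l : Filter ι} [l.NeBot] {x : ι → Lp ℝ 1 μ}
    {a : Lp ℝ 1 μ} (h : TendstoWeakly x l a) {B : Set Ω} {c : ℝ}
    (hc : ∀ᶠ i in l, c ≤ ∫ ω in B, x i ω ∂μ) : c ≤ ∫ ω in B, a ω ∂μ := by
  have hlinear : IsLinearMap ℝ fun f : Lp ℝ 1 μ => ∫ ω in B, f ω ∂μ :=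
    { map_add := fun f g => by
        rw [integral_congr_ae (ae_restrict_of_ae (Lp.coeFn_add f g))]
        exact integral_add (L1.integrable_coeFn f).integrableOn (L1.integrable_coeFn g).integrableOn
      map_smul := fun r f => by
        rw [integral_congr_ae (ae_restrict_of_ae (Lp.coeFn_smul r f))]
        exact integral_smul r _ }
  exact h.mem_of_convex_of_isClosed (s := {f : Lp ℝ 1 μ | c ≤ ∫ ω in B, f ω ∂μ})
    (convex_halfSpace_ge hlinear c) (isClosed_le continuous_const (continuous_setIntegral B)) hc

theorem setIntegral_le_setIntegral_add_norm_sub (f g : Lp ℝ 1 μ) (B : Set Ω) :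
    ∫ ω in B, f ω ∂μ ≤ ∫ ω in B, g ω ∂μ + ‖f - g‖ := by
  have hf := (L1.integrable_coeFn f).integrableOn (s := B)
  have hg := (L1.integrable_coeFn g).integrableOn (s := B)
  have hsub : Integrable (fun ω => f ω - g ω) μ :=
    (L1.integrable_coeFn f).sub (L1.integrable_coeFn g)
  rw [← sub_le_iff_le_add', ← integral_sub hf hg]
  calc ∫ ω in B, (f ω - g ω) ∂μ ≤ ∫ ω in B, ‖f ω - g ω‖ ∂μ :=
        integral_mono hsub.integrableOn hsub.norm.integrableOn fun ω => Real.le_norm_self _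
    _ ≤ ∫ ω, ‖f ω - g ω‖ ∂μ :=
        setIntegral_le_integral hsub.norm (.of_forall fun ω => norm_nonneg _)
    _ = ‖f - g‖ := by
        rw [L1.norm_eq_integral_norm]
        exact integral_congr_ae ((Lp.coeFn_sub f g).fun_comp norm).symm

theorem exists_pos_le_on_of_summable_norm_sub {ι : Type*} {x : ι → Lp ℝ 1 μ} {a : Lp ℝ 1 μ}
    {B : Set Ω} (hB : MeasurableSet B) (hsummable : Summable fun i => ‖x i - a‖)
    (hlt : ∑' i, ‖x i - a‖ < ∫ ω in B, a ω ∂μ) :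
    ∃ η > 0, ∃ A, MeasurableSet A ∧ A ⊆ B ∧ 0 < μ A ∧ ∀ i, ∀ᵐ ω ∂μ, ω ∈ A → η ≤ x i ω := by
  obtain ⟨b, hbx, hab⟩ := exists_forall_le_of_summable_norm_sub hsummable
  have hpos : 0 < ∫ ω in B, b ω ∂μ := by
    linarith [setIntegral_le_setIntegral_add_norm_sub a b B]
  obtain ⟨η, hη, A, hA, hAB, hA_pos, hle⟩ :=
    exists_pos_le_on_of_setIntegral_pos (Lp.aestronglyMeasurable b).aemeasurable hB hpos
  refine ⟨η, hη, A, hA, hAB, hA_pos, fun i => ?_⟩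
  filter_upwards [hle, (Lp.coeFn_le b (x i)).2 (hbx i)] with ω hω hbω hωA
  exact (hω hωA).trans hbω

end MeasureSpace

/-- If `(g_n)` is a uniformly integrable sequence in `L¹(μ)` with `∫_B g_n dμ ≥ ε` for all
`n` (for some `ε > 0` and `B ∈ Σ` of positive measure), then some convex block subsequence
`(h_k)` of `(g_n)` satisfies `h_k ≥ η > 0` on a set `A ⊆ B` of positive measure. -/
theorem exists_convexBlock_ge_of_unifIntegrable
    {Ω : Type*} [MeasurableSpace Ω] (μ : Measure Ω) [IsFiniteMeasure μ]
    (g : ℕ → Ω → ℝ) (hgint : ∀ n, Integrable (g n) μ)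
    (hgbd : ∃ M : ℝ, ∀ n, ∫ ω, |g n ω| ∂μ ≤ M)
    (hgui : ∀ ε > (0 : ℝ), ∃ δ > (0 : ℝ), ∀ A : Set Ω, MeasurableSet A →
      μ A ≤ ENNReal.ofReal δ → ∀ n, ∫ ω in A, |g n ω| ∂μ ≤ ε)
    (ε : ℝ) (hε : 0 < ε) (B : Set Ω) (hB : MeasurableSet B) (hBpos : 0 < μ B)
    (hgB : ∀ n, ε ≤ ∫ ω in B, g n ω ∂μ) :
    ∃ h : ℕ → Ω → ℝ, ConvexBlock g h ∧
      ∃ η > (0 : ℝ), ∃ A : Set Ω, MeasurableSet A ∧ A ⊆ B ∧ 0 < μ A ∧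
        ∀ k, ∀ᵐ ω ∂μ, ω ∈ A → η ≤ h k ω := by
  obtain ⟨M, hM⟩ := hgbd
  have hmem (n) : MemLp (g n) 1 μ := memLp_one_iff_integrable.2 (hgint n)
  let x (n : ℕ) : Lp ℝ 1 μ := (hmem n).toLp
  have hx (n) : x n =ᵐ[μ] g n := (hmem n).coeFn_toLp
  have hui : UniformIntegrable (fun n => ⇑(x n)) 1 μ :=
    (uniformIntegrable_one_of_integral_norm_le hgint hM hgui).ae_eq fun n => (hx n).symm
  obtain ⟨a, ha⟩ := exists_tendstoWeakly_ultrafilter_of_uniformIntegrable hui (hyperfilter ℕ)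
  have haB : ε ≤ ∫ ω in B, a ω ∂μ := ha.le_setIntegral <| Eventually.of_forall fun n =>
    (hgB n).trans_eq (integral_congr_ae (ae_restrict_of_ae (hx n).symm))
  obtain ⟨H, hH, hsummable, htsum⟩ :=
    ha.exists_convexBlock_tsum_norm_sub_le Nat.hyperfilter_le_atTop (half_pos hε)
  obtain ⟨η, hη, A, hA, hAB, hA_pos, hle⟩ :=
    exists_pos_le_on_of_summable_norm_sub hB hsummable (by linarith)
  obtain ⟨h, hgh, hhH⟩ := hH.exists_ae_eq_of_toLp hmem
  refine ⟨h, hgh, η, hη, A, hA, hAB, hA_pos, fun k => ?_⟩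
  filter_upwards [hle k, hhH k] with ω hω hhω hωA
  exact hhω ▸ hω hωA
end
end
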